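/- Let G be a finite simple graph with two cycles sharing a vertex and k ≥ 2. Then α_k(G) ≥ ((k−1)/k)·(n − ω(G) + 1), where n = |V(G)| and ω(G) is the cycle-space dimension. In particular, equality α_k(G) = ((k−1)/k)(n − ω(G)) forces the cycles of G to be pairwise vertex-disjoint. -/

import Mathlib

open SimpleGraph

/-- A set `S` is a generalized `k`-independent set in `G` if the induced subgraph `G[S]`
contains no tree on `k` vertices, equivalently every connected component of `G[S]`
has at most `k - 1` vertices. -/
def IsGenKIndep {V : Type*} (G : SimpleGraph V) (k : ℕ) (S : Set V) : Prop :=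
  ∀ c : (G.induce S).ConnectedComponent, Nat.card c.supp ≤ k - 1

/-- The generalized `k`-independence number: the maximum size of a generalized
`k`-independent set. -/
noncomputable def alphaK {V : Type*} (G : SimpleGraph V) (k : ℕ) : ℕ :=
  sSup {m | ∃ S : Set V, IsGenKIndep G k S ∧ S.ncard = m}

/-- The dimension of the cycle space: `|E| - |V| + c(G)` (as a natural number;
note `|E| + c(G) ≥ |V|` always holds). -/
noncomputable def cycleDim {V : Type*} (G : SimpleGraph V) : ℕ :=
  Nat.card G.edgeSet + Nat.card G.ConnectedComponent - Nat.card V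

/-- `x` lies on a cycle of `G`. -/
def OnCycle {V : Type*} (G : SimpleGraph V) (x : V) : Prop :=
  ∃ (u : V) (w : G.Walk u u), w.IsCycle ∧ x ∈ w.support


/-- Restriction of the edges of `G` to pairs inside `B`. -/
def restrictTo {V : Type*} (G : SimpleGraph V) (B : Set V) : SimpleGraph V where
  Adj a b := G.Adj a b ∧ a ∈ B ∧ b ∈ B
  symm := ⟨fun _ _ h => ⟨h.1.symm, h.2.2, h.2.1⟩⟩
  loopless := ⟨fun _ h => G.loopless.irrefl _ h.1⟩

/-- Integer-valued cyclomatic number. -/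
noncomputable def cycZ {V : Type*} (G : SimpleGraph V) : ℤ :=
  (Nat.card G.edgeSet : ℤ) + Nat.card G.ConnectedComponent - Nat.card V

lemma card_edges_delete {V : Type*} [Fintype V] (G : SimpleGraph V) (e : Sym2 V)
    (he : e ∈ G.edgeSet) :
    Nat.card (G.deleteEdges {e}).edgeSet + 1 = Nat.card G.edgeSet := by
  rw [edgeSet_deleteEdges]
  exact Set.ncard_sdiff_singleton_add_one he (Set.toFinite _)

lemma reach_split {V : Type*} (G : SimpleGraph V) (a b : V) {p q : V} (w : G.Walk p q) :
    (G.deleteEdges {s(a, b)}).Reachable p q ∨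
    ((G.deleteEdges {s(a, b)}).Reachable p a ∧ (G.deleteEdges {s(a, b)}).Reachable q b) ∨
    ((G.deleteEdges {s(a, b)}).Reachable p b ∧ (G.deleteEdges {s(a, b)}).Reachable q a) := by
  induction w with
  | nil => exact Or.inl (Reachable.refl _)
  | @cons p p' q h w ih =>
    by_cases he : s(p, p') = s(a, b)
    · rw [Sym2.eq_iff] at he
      rcases he with ⟨rfl, rfl⟩ | ⟨rfl, rfl⟩
      · rcases ih with h1 | h1 | h1
        · exact Or.inr (Or.inl ⟨Reachable.refl _, h1.symm⟩)
        · exact Or.inr (Or.inl ⟨Reachable.refl _, h1.2⟩)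
        · exact Or.inl h1.2.symm
      · rcases ih with h1 | h1 | h1
        · exact Or.inr (Or.inr ⟨Reachable.refl _, h1.symm⟩)
        · exact Or.inl h1.2.symm
        · exact Or.inr (Or.inr ⟨Reachable.refl _, h1.2⟩)
    · have hr : (G.deleteEdges {s(a, b)}).Reachable p p' :=
        Adj.reachable (by rw [deleteEdges_adj]; exact ⟨h, he⟩)
      rcases ih with h1 | h1 | h1
      · exact Or.inl (hr.trans h1)
      · exact Or.inr (Or.inl ⟨hr.trans h1.1, h1.2⟩)
      · exact Or.inr (Or.inr ⟨hr.trans h1.1, h1.2⟩)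

lemma card_comp_delete_le {V : Type*} [Fintype V] (G : SimpleGraph V) (a b : V) :
    Nat.card (G.deleteEdges {s(a, b)}).ConnectedComponent
      ≤ Nat.card G.ConnectedComponent + 1 := by
  classical
  set H := G.deleteEdges {s(a, b)} with hH
  have hle : H ≤ G := deleteEdges_le _
  rw [← Finite.card_option]
  let f : H.ConnectedComponent → Option G.ConnectedComponent := fun d =>
    if d = H.connectedComponentMk b then none else some (d.map (Hom.ofLE hle))
  refine Nat.card_le_card_of_injective f ?_
  intro d1 d2 h
  induction d1 using ConnectedComponent.ind with | _ p =>
  induction d2 using ConnectedComponent.ind with | _ q =>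
  simp only [f] at h
  split_ifs at h with h1 h2 h2
  · rw [h1, h2]
  · have h3 := Option.some.inj h
    simp only [ConnectedComponent.map_mk, Hom.ofLE_apply, ConnectedComponent.eq] at h3
    rw [ConnectedComponent.eq] at h1 h2 ⊢
    obtain ⟨w⟩ := h3
    rcases reach_split G a b w with h4 | h4 | h4
    · exact h4
    · exact absurd h4.2 h2
    · exact absurd h4.1 h1

lemma cycZ_delete_le {V : Type*} [Fintype V] (G : SimpleGraph V) (e : Sym2 V)
    (he : e ∈ G.edgeSet) : cycZ (G.deleteEdges {e}) ≤ cycZ G := by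
  induction e using Sym2.ind with | _ a b =>
  have h1 := card_edges_delete G _ he
  have h2 := card_comp_delete_le G a b
  unfold cycZ
  omega

lemma cycZ_delete_cycle {V : Type*} [Fintype V] (G : SimpleGraph V) (e : Sym2 V)
    {u : V} (w : G.Walk u u) (hw : w.IsCycle) (he : e ∈ w.edges) :
    cycZ (G.deleteEdges {e}) + 1 ≤ cycZ G := by
  induction e using Sym2.ind with | _ a b =>
  have heG := w.edges_subset_edgeSet he
  have h1 := card_edges_delete G _ heG
  set H := G.deleteEdges {s(a, b)} with hH
  have hle : H ≤ G := deleteEdges_le _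
  have hab : H.Reachable a b := by
    by_contra hcon
    have hb : G.IsBridge s(a, b) := by
      rw [isBridge_iff]
      exact hcon
    rw [isBridge_iff_forall_cycle_notMem heG] at hb
    exact hb w hw he
  have h2 : Nat.card H.ConnectedComponent ≤ Nat.card G.ConnectedComponent := by
    refine Nat.card_le_card_of_injective (fun d => d.map (Hom.ofLE hle)) ?_
    intro d1 d2 h
    induction d1 using ConnectedComponent.ind with | _ p =>
    induction d2 using ConnectedComponent.ind with | _ q =>
    simp only [ConnectedComponent.map_mk, Hom.ofLE_apply, ConnectedComponent.eq] at h
    rw [ConnectedComponent.eq]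
    obtain ⟨w⟩ := h
    rcases reach_split G a b w with h4 | h4 | h4
    · exact h4
    · exact h4.1.trans (hab.trans h4.2.symm)
    · exact h4.1.trans (hab.symm.trans h4.2.symm)
  unfold cycZ
  omega

lemma cycZ_mono {V : Type*} [Fintype V] (H : SimpleGraph V) :
    ∀ (n : ℕ) (G : SimpleGraph V), Nat.card G.edgeSet = n → H ≤ G → cycZ H ≤ cycZ G := by
  intro n
  induction n with
  | zero =>
    intro G hn hle
    have : G = ⊥ := by
      rw [← edgeSet_eq_empty]
      exact (Set.ncard_eq_zero (Set.toFinite _)).1 hn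
    subst this
    rw [le_bot_iff.1 hle]
  | succ n ih =>
    intro G hn hle
    by_cases hGH : G ≤ H
    · rw [le_antisymm hle hGH]
    · have : ∃ e ∈ G.edgeSet, e ∉ H.edgeSet := by
        rw [← edgeSet_subset_edgeSet, Set.not_subset] at hGH
        exact hGH
      obtain ⟨e, he, heH⟩ := this
      have h1 := card_edges_delete G e he
      refine le_trans (ih (G.deleteEdges {e}) (by omega) ?_) (cycZ_delete_le G e he)
      rw [← edgeSet_subset_edgeSet, edgeSet_deleteEdges]
      intro x hx
      refine ⟨edgeSet_subset_edgeSet.2 hle hx, ?_⟩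
      rintro rfl
      exact heH hx

lemma cycZ_nonneg {V : Type*} [Fintype V] (G : SimpleGraph V) : 0 ≤ cycZ G := by
  refine le_trans (le_of_eq ?_) (cycZ_mono ⊥ _ G rfl bot_le)
  have h2 : Nat.card (⊥ : SimpleGraph V).ConnectedComponent = Nat.card V := by
    symm
    refine Nat.card_eq_of_bijective (fun v => (⊥ : SimpleGraph V).connectedComponentMk v) ⟨?_, ?_⟩
    · intro a b h
      simpa using h
    · intro c
      induction c using ConnectedComponent.ind with | _ p => exact ⟨p, rfl⟩
  unfold cycZ
  rw [h2]
  simp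

lemma exists_edge_at {V : Type*} {G : SimpleGraph V} {u : V} (w : G.Walk u u)
    (hw : w.IsCycle) {x : V} (hx : x ∈ w.support) : ∃ e ∈ w.edges, x ∈ e := by
  classical
  rcases Walk.mem_support_iff_exists_mem_edges.1 hx with h | h
  · subst h
    cases w with
    | nil => exact absurd rfl hw.ne_nil
    | cons h p => exact ⟨_, List.mem_cons_self, Sym2.mem_mk_left _ _⟩
  · exact h

lemma restrict_le_delete {V : Type*} (G : SimpleGraph V) (x : V) (e : Sym2 V) (hx : x ∈ e) :
    restrictTo G {x}ᶜ ≤ G.deleteEdges {e} := by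
  intro a b h
  rw [deleteEdges_adj]
  refine ⟨h.1, ?_⟩
  rintro rfl
  rcases Sym2.mem_iff.1 hx with rfl | rfl
  · exact h.2.1 rfl
  · exact h.2.2 rfl

lemma cycZ_restrict_one {V : Type*} [Fintype V] (G : SimpleGraph V) {u x : V}
    (w : G.Walk u u) (hw : w.IsCycle) (hx : x ∈ w.support) :
    cycZ (restrictTo G {x}ᶜ) + 1 ≤ cycZ G := by
  obtain ⟨e, he, hxe⟩ := exists_edge_at w hw hx
  have h1 := cycZ_mono _ _ _ rfl (restrict_le_delete G x e hxe)
  have h2 := cycZ_delete_cycle G e w hw he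
  omega

lemma cycZ_restrict_two {V : Type*} [Fintype V] (G : SimpleGraph V) {u v x : V}
    (w₁ : G.Walk u u) (hw₁ : w₁.IsCycle) (w₂ : G.Walk v v) (hw₂ : w₂.IsCycle)
    (e : Sym2 V) (he₁ : e ∈ w₁.edges) (he₂ : e ∉ w₂.edges) (hxe : x ∈ e)
    (hx : x ∈ w₂.support) :
    cycZ (restrictTo G {x}ᶜ) + 2 ≤ cycZ G := by
  have h1 := cycZ_delete_cycle G e w₁ hw₁ he₁
  have h2 := cycZ_restrict_one (x := x) (G.deleteEdges {e}) (w₂.toDeleteEdge e he₂)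
    (hw₂.toDeleteEdges G {e} _) (by simpa [Walk.toDeleteEdge, Walk.toDeleteEdges] using hx)
  have h3 : restrictTo G {x}ᶜ ≤ restrictTo (G.deleteEdges {e}) {x}ᶜ := by
    intro a b h
    exact ⟨restrict_le_delete G x e hxe h, h.2⟩
  have h4 := cycZ_mono _ _ _ rfl h3
  omega

lemma exists_branch_walk {V : Type*} {G : SimpleGraph V} {v : V} (w₂ : G.Walk v v)
    {p q : V} (w : G.Walk p q) (hp : p ∈ w₂.support) (h : ∃ e ∈ w.edges, e ∉ w₂.edges) :
    ∃ e ∈ w.edges, e ∉ w₂.edges ∧ ∃ x ∈ e, x ∈ w₂.support := by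
  induction w with
  | nil => simp at h
  | @cons p p' q hadj w ih =>
    by_cases he : s(p, p') ∈ w₂.edges
    · have h' : ∃ e ∈ w.edges, e ∉ w₂.edges := by
        obtain ⟨e, he1, he2⟩ := h
        rw [Walk.edges_cons, List.mem_cons] at he1
        rcases he1 with rfl | he1
        · exact absurd he he2
        · exact ⟨e, he1, he2⟩
      obtain ⟨e, h1, h2⟩ := ih (Walk.snd_mem_support_of_mem_edges _ he) h'
      exact ⟨e, by rw [Walk.edges_cons]; exact List.mem_cons_of_mem _ h1, h2⟩
    · exact ⟨s(p, p'), by rw [Walk.edges_cons]; exact List.mem_cons_self, he, p,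
        Sym2.mem_mk_left _ _, hp⟩

lemma exists_drop_two_aux {V : Type*} [Fintype V] (G : SimpleGraph V) {u v : V}
    (w₁ : G.Walk u u) (w₂ : G.Walk v v) (hw₁ : w₁.IsCycle) (hw₂ : w₂.IsCycle)
    (h : ∃ e ∈ w₁.edges, e ∉ w₂.edges) (x : V) (hx₁ : x ∈ w₁.support) (hx₂ : x ∈ w₂.support) :
    ∃ y, cycZ (restrictTo G {y}ᶜ) + 2 ≤ cycZ G := by
  classical
  have hmem : ∀ e, e ∈ (w₁.rotate x hx₁).edges ↔ e ∈ w₁.edges := fun e =>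
    (w₁.rotate_edges x hx₁).mem_iff
  obtain ⟨e, he1, he2⟩ := h
  obtain ⟨e, he1, he2, y, hye, hy⟩ := exists_branch_walk w₂ (w₁.rotate x hx₁) hx₂
    ⟨e, (hmem e).2 he1, he2⟩
  exact ⟨y, cycZ_restrict_two G w₁ hw₁ w₂ hw₂ e ((hmem e).1 he1) he2 hye hy⟩

lemma exists_feedback {V : Type*} [Fintype V] [DecidableEq V] :
    ∀ (n : ℕ) (G : SimpleGraph V), cycZ G ≤ n →
    ∃ X : Finset V, X.card ≤ n ∧ (restrictTo G (↑X)ᶜ).IsAcyclic := by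
  intro n
  induction n with
  | zero =>
    intro G hG
    refine ⟨∅, by simp, ?_⟩
    intro u w hw
    have hle : restrictTo G (↑(∅ : Finset V))ᶜ ≤ G := fun a b h => h.1
    have h1 := cycZ_restrict_one _ w hw w.start_mem_support
    have h2 := cycZ_mono _ _ _ rfl hle
    have h3 := cycZ_nonneg (restrictTo (restrictTo G (↑(∅ : Finset V))ᶜ) {u}ᶜ)
    push_cast at hG
    omega
  | succ n ih =>
    intro G hG
    by_cases hac : G.IsAcyclic
    · exact ⟨∅, by simp, hac.anti (fun a b h => h.1)⟩
    · simp only [IsAcyclic, not_forall, not_not] at hac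
      obtain ⟨u, w, hw⟩ := hac
      have h1 := cycZ_restrict_one _ w hw w.start_mem_support
      obtain ⟨X, hX, hXa⟩ := ih (restrictTo G {u}ᶜ) (by push_cast at hG; omega)
      refine ⟨insert u X, (Finset.card_insert_le _ _).trans (by omega), hXa.anti ?_⟩
      rintro a b ⟨h1, h2, h3⟩
      simp only [Finset.coe_insert, Set.mem_compl_iff, Set.mem_insert_iff, not_or] at h2 h3
      exact ⟨⟨h1, h2.1, h3.1⟩, h2.2, h3.2⟩

/-- Witness for all components of `F[S]` being small. -/
def Good {V : Type*} (F : SimpleGraph V) (k : ℕ) (S : Finset V) : Prop :=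
  ∃ f : V → Finset V, (∀ a ∈ S, a ∈ f a ∧ (f a).card ≤ k - 1) ∧
    ∀ a ∈ S, ∀ b ∈ S, F.Adj a b → f a = f b

lemma Good.indep {V : Type*} [Fintype V] {F : SimpleGraph V} {k : ℕ} {S : Finset V}
    (h : Good F k S) : IsGenKIndep F k (S : Set V) := by
  classical
  obtain ⟨f, h1, h2⟩ := h
  intro c
  induction c using ConnectedComponent.ind with | _ a =>
  have key : ∀ x y : (S : Set V), (F.induce (S : Set V)).Walk x y → f x = f y := by
    intro x y w
    induction w with
    | nil => rfl
    | @cons x y z hadj w ih => exact (h2 _ x.2 _ y.2 hadj).trans ih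
  refine le_trans ?_ (h1 a a.2).2
  rw [← Set.ncard_coe_finset (f a), ← Nat.card_coe_set_eq]
  refine Nat.card_le_card_of_injective
    (fun x => (⟨x.1.1, ?_⟩ : ((f a : Finset V) : Set V))) ?_
  · have hx := x.2
    rw [ConnectedComponent.mem_supp_iff, ConnectedComponent.eq] at hx
    obtain ⟨w⟩ := hx
    rw [← key _ _ w]
    exact (h1 _ x.1.2).1
  · intro x y hxy
    simp only [Subtype.mk.injEq] at hxy
    exact Subtype.ext (Subtype.ext hxy)

open Classical in
/-- The vertices reachable from `u` inside `B`. -/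
noncomputable def comp {V : Type*} [Fintype V] (F : SimpleGraph V) (B : Finset V) (u : V) :
    Finset V := Finset.univ.filter fun w => (restrictTo F (B : Set V)).Reachable u w

lemma mem_comp {V : Type*} [Fintype V] {F : SimpleGraph V} {B : Finset V} {u w : V} :
    w ∈ comp F B u ↔ (restrictTo F (B : Set V)).Reachable u w := by
  simp [comp]

lemma comp_subset {V : Type*} [Fintype V] {F : SimpleGraph V} {B : Finset V} {u : V}
    (hu : u ∈ B) : comp F B u ⊆ B := by
  intro w hw
  rw [mem_comp] at hw
  obtain ⟨p⟩ := hw.symm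
  cases p with
  | nil => exact hu
  | cons h p => exact h.2.1

lemma comp_closed {V : Type*} [Fintype V] {F : SimpleGraph V} {B : Finset V} {u a b : V}
    (ha : a ∈ comp F B u) (haB : a ∈ B) (hbB : b ∈ B) (h : F.Adj a b) : b ∈ comp F B u := by
  rw [mem_comp] at *
  exact ha.trans (Adj.reachable ⟨h, haB, hbB⟩)

lemma good_of_comp {V : Type*} [Fintype V] {F : SimpleGraph V} {k : ℕ} {B : Finset V}
    (h : ∀ u ∈ B, (comp F B u).card ≤ k - 1) : Good F k B := by
  refine ⟨comp F B, fun a ha => ⟨mem_comp.2 (Reachable.refl _), h a ha⟩, ?_⟩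
  intro a ha b hb hab
  have hr : (restrictTo F (B : Set V)).Reachable a b := Adj.reachable ⟨hab, ha, hb⟩
  ext w
  rw [mem_comp, mem_comp]
  exact ⟨fun h => hr.symm.trans h, fun h => hr.trans h⟩

lemma exists_min_pair {V : Type*} [Fintype V] [DecidableEq V] (F : SimpleGraph V)
    (hF : F.IsAcyclic) (k : ℕ) (W : Finset V) :
    ∀ (n : ℕ) (A : Finset V) (v : V), A.card = n → v ∈ A → A ⊆ W → k ≤ A.card →
    (∀ a ∈ A.erase v, ∀ b ∈ W \ A, ¬ F.Adj a b) →
    ∃ (A : Finset V) (v : V), v ∈ A ∧ A ⊆ W ∧ k ≤ A.card ∧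
    (∀ a ∈ A.erase v, ∀ b ∈ W \ A, ¬ F.Adj a b) ∧
    ∀ u ∈ A.erase v, (comp F (A.erase v) u).card ≤ k - 1 := by
  intro n
  induction n using Nat.strong_induction_on with | _ n ih =>
  intro A v hn hv hAW hk hcl
  by_cases hall : ∀ u ∈ A.erase v, (comp F (A.erase v) u).card ≤ k - 1
  · exact ⟨A, v, hv, hAW, hk, hcl, hall⟩
  push Not at hall
  obtain ⟨u, hu, hbig⟩ := hall
  set C := comp F (A.erase v) u with hC
  have hCB : C ⊆ A.erase v := comp_subset hu
  have hCA : C ⊆ A := hCB.trans (Finset.erase_subset _ _)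
  have hlt : C.card < n := by
    have := Finset.card_le_card hCB
    have := Finset.card_erase_lt_of_mem hv
    omega
  -- edges leaving `C` inside `W` go to `v`
  have hout : ∀ a ∈ C, ∀ b ∈ W \ C, F.Adj a b → b = v := by
    intro a ha b hb hab
    by_contra hbv
    rw [Finset.mem_sdiff] at hb
    by_cases hbA : b ∈ A
    · exact hb.2 (comp_closed ha (hCB ha) (Finset.mem_erase.2 ⟨hbv, hbA⟩) hab)
    · exact hcl a (hCB ha) b (Finset.mem_sdiff.2 ⟨hb.1, hbA⟩) hab
  by_cases hnb : ∃ u' ∈ C, F.Adj v u'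
  · obtain ⟨u', hu', hadj⟩ := hnb
    refine ih C.card hlt C u' rfl hu' (hCA.trans hAW) (by omega) ?_
    intro a ha b hb hab
    rw [Finset.mem_erase] at ha
    have hbv := hout a ha.2 b hb hab
    subst hbv
    have hbr := isAcyclic_iff_forall_adj_isBridge.1 hF hadj
    rw [isBridge_iff] at hbr
    apply hbr
    have r1 : (F.deleteEdges {s(b, u')}).Adj b a := by
      rw [deleteEdges_adj]
      refine ⟨hab.symm, ?_⟩
      intro h
      rw [Set.mem_singleton_iff, Sym2.eq_iff] at h
      rcases h with h | h
      · exact ha.1 h.2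
      · exact F.loopless.irrefl b (by have := hab; rwa [h.2] at this)
    have r2 : (restrictTo F (A.erase b : Finset V)).Reachable a u' :=
      (mem_comp.1 ha.2).symm.trans (mem_comp.1 hu')
    refine r1.reachable.trans (r2.mono ?_)
    intro p q hpq
    rw [deleteEdges_adj]
    refine ⟨hpq.1, ?_⟩
    intro h
    rw [Set.mem_singleton_iff, Sym2.eq_iff] at h
    have hp := hpq.2.1
    have hq := hpq.2.2
    simp only [Finset.coe_erase, Set.mem_sdiff, Set.mem_singleton_iff] at hp hq
    rcases h with h | h
    · exact hp.2 h.1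
    · exact hq.2 h.2
  · refine ih C.card hlt C u rfl (mem_comp.2 (Reachable.refl _)) (hCA.trans hAW) (by omega) ?_
    intro a ha b hb hab
    have ha := Finset.mem_of_mem_erase ha
    have hbv := hout a ha b hb hab
    subst hbv
    exact hnb ⟨a, ha, hab.symm⟩

lemma forest_bound {V : Type*} [Fintype V] [DecidableEq V] (F : SimpleGraph V)
    (hF : F.IsAcyclic) (k : ℕ) (hk : 2 ≤ k) :
    ∀ (n : ℕ) (W : Finset V), W.card = n →
    ∃ S ⊆ W, Good F k S ∧ ((k : ℤ) - 1) * W.card ≤ k * S.card := by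
  intro n
  induction n using Nat.strong_induction_on with | _ n ih =>
  intro W hn
  by_cases hall : ∀ u ∈ W, (comp F W u).card ≤ k - 1
  · refine ⟨W, Finset.Subset.refl _, good_of_comp hall, ?_⟩
    nlinarith [Int.natCast_nonneg W.card]
  push Not at hall
  obtain ⟨u, hu, hbig⟩ := hall
  obtain ⟨A, v, hv, hAW, hkA, hcl, hsmall⟩ := exists_min_pair F hF k W _ (comp F W u) u rfl
    (mem_comp.2 (Reachable.refl _)) (comp_subset hu) (by omega) (by
      intro a ha b hb hab
      rw [Finset.mem_sdiff] at hb
      have ha := Finset.mem_of_mem_erase ha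
      exact hb.2 (comp_closed ha (comp_subset hu ha) hb.1 hab))
  have hcard : (W \ A).card + A.card = W.card := Finset.card_sdiff_add_card_eq_card hAW
  obtain ⟨S', hS', ⟨f', hf1, hf2⟩, hb⟩ := ih (W \ A).card (by omega) (W \ A) rfl
  obtain ⟨f, hg1, hg2⟩ := good_of_comp hsmall
  have hnot : ∀ b ∈ S', b ∉ A.erase v := fun b hb h =>
    (Finset.mem_sdiff.1 (hS' hb)).2 (Finset.mem_of_mem_erase h)
  refine ⟨A.erase v ∪ S', ?_, ⟨fun a => if a ∈ A.erase v then f a else f' a, ?_, ?_⟩, ?_⟩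
  · exact Finset.union_subset ((Finset.erase_subset _ _).trans hAW)
      (hS'.trans Finset.sdiff_subset)
  · intro a ha
    rcases Finset.mem_union.1 ha with ha | ha
    · simpa only [if_pos ha] using hg1 a ha
    · simpa only [if_neg (hnot a ha)] using hf1 a ha
  · intro a ha b hb hab
    rcases Finset.mem_union.1 ha with ha | ha <;> rcases Finset.mem_union.1 hb with hb | hb
    · simpa only [if_pos ha, if_pos hb] using hg2 a ha b hb hab
    · exact absurd hab (hcl a ha b (hS' hb))
    · exact absurd hab.symm (hcl b hb a (hS' ha))
    · simpa only [if_neg (hnot a ha), if_neg (hnot b hb)] using hf2 a ha b hb hab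
  · have hdis : Disjoint (A.erase v) S' :=
      Finset.disjoint_left.2 fun a h1 h2 => hnot a h2 h1
    rw [Finset.card_union_of_disjoint hdis]
    have h5 := Finset.card_erase_add_one hv
    have h6 : ((A.erase v).card : ℤ) = A.card - 1 := by omega
    have h7 : ((W \ A).card : ℤ) = W.card - A.card := by omega
    rw [h7] at hb
    push_cast
    rw [h6]
    have h8 : (k : ℤ) ≤ A.card := by exact_mod_cast hkA
    nlinarith

theorem alphaK_lower_bound_of_overlapping_cycles {V : Type*} [Fintype V]
    (G : SimpleGraph V) (k : ℕ) (hk : 2 ≤ k)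
    (hover : ∃ (u v : V) (w₁ : G.Walk u u) (w₂ : G.Walk v v),
      w₁.IsCycle ∧ w₂.IsCycle ∧ {e | e ∈ w₁.edges} ≠ {e | e ∈ w₂.edges} ∧
        ∃ x, x ∈ w₁.support ∧ x ∈ w₂.support) :
    ((k : ℚ) - 1) / k * ((Nat.card V : ℚ) - cycleDim G + 1) ≤ alphaK G k := by
  classical
  obtain ⟨u, v, w₁, w₂, hw₁, hw₂, hne, x, hx₁, hx₂⟩ := hover
  have hy : ∃ y, cycZ (restrictTo G {y}ᶜ) + 2 ≤ cycZ G := by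
    by_cases h : ∃ e ∈ w₁.edges, e ∉ w₂.edges
    · exact exists_drop_two_aux G w₁ w₂ hw₁ hw₂ h x hx₁ hx₂
    · by_cases h' : ∃ e ∈ w₂.edges, e ∉ w₁.edges
      · exact exists_drop_two_aux G w₂ w₁ hw₂ hw₁ h' x hx₂ hx₁
      · push Not at h h'
        exact absurd (Set.ext fun e => ⟨h e, h' e⟩) hne
  obtain ⟨y, hy⟩ := hy
  have h0 := cycZ_nonneg (restrictTo G {y}ᶜ)
  obtain ⟨X, hX, hXa⟩ := exists_feedback (cycZ (restrictTo G {y}ᶜ)).toNat (restrictTo G {y}ᶜ)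
    (by omega)
  obtain ⟨S, hSW, ⟨f, hf1, hf2⟩, hS⟩ := forest_bound _ hXa k hk _ (insert y X)ᶜ rfl
  have hgood : Good G k S := by
    refine ⟨f, hf1, fun a ha b hb hab => hf2 a ha b hb ?_⟩
    have h1 := hSW ha
    have h2 := hSW hb
    simp only [Finset.mem_compl, Finset.mem_insert, not_or] at h1 h2
    exact ⟨⟨hab, h1.1, h2.1⟩, by simpa using h1.2, by simpa using h2.2⟩
  have hα : S.card ≤ alphaK G k := by
    refine le_csSup ⟨Nat.card V, ?_⟩ ⟨(S : Set V), hgood.indep, Set.ncard_coe_finset S⟩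
    rintro m ⟨T, -, rfl⟩
    rw [← Set.ncard_univ]
    exact Set.ncard_le_ncard (Set.subset_univ T) (Set.toFinite _)
  have hcard : ((insert y X)ᶜ : Finset V).card + (insert y X).card = Nat.card V := by
    rw [Nat.card_eq_fintype_card, add_comm]
    exact Finset.card_add_card_compl _
  have hins := Finset.card_insert_le y X
  have hdim : (cycleDim G : ℤ) = cycZ G := by
    have := cycZ_nonneg G
    unfold cycleDim cycZ at *
    omega
  have hW : (Nat.card V : ℤ) - cycleDim G + 1 ≤ ((insert y X)ᶜ : Finset V).card := by
    omega
  have hfin : ((k : ℤ) - 1) * ((Nat.card V : ℤ) - cycleDim G + 1) ≤ k * alphaK G k := by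
    have hk1 : (0 : ℤ) ≤ (k : ℤ) - 1 := by omega
    calc _ ≤ ((k : ℤ) - 1) * ((insert y X)ᶜ : Finset V).card :=
          mul_le_mul_of_nonneg_left hW hk1
      _ ≤ k * S.card := hS
      _ ≤ k * alphaK G k := by
          exact mul_le_mul_of_nonneg_left (by exact_mod_cast hα) (by omega)
  have hq : ((k : ℚ) - 1) * ((Nat.card V : ℚ) - cycleDim G + 1) ≤ k * alphaK G k := by
    exact_mod_cast hfin
  have hkpos : (0 : ℚ) < k := by
    have : 0 < k := by omega
    exact_mod_cast this
  rw [div_mul_eq_mul_div, div_le_iff₀ hkpos]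
  linarith
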